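/- arXiv:2103.06917 — 5 statements merged into one kernel-verified Lean document; each statement's English description precedes it below -/
import Mathlib

section
/- Let R → R' be a faithfully flat homomorphism of Noetherian, integrally closed local domains. Then any ideal I of R such that the extended ideal I·R' (equivalently, I ⊗_R R') is a principal ideal of R' is itself a principal ideal of R. -/
/-- **Danilov's lemma** (Lemma 3.3 of the paper).
Let `R → R'` be a faithfully flat homomorphism of Noetherian, integrally closed local
domains. Then any ideal `I` of `R` whose extension `I·R'` is a principal ideal of `R'`
is itself a principal ideal of `R`. -/
theorem ideal_isPrincipal_of_map_isPrincipal_of_faithfullyFlat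
    (R R' : Type*) [CommRing R] [CommRing R'] [IsDomain R] [IsDomain R']
    [IsNoetherianRing R] [IsNoetherianRing R']
    [IsLocalRing R] [IsLocalRing R']
    [IsIntegrallyClosed R] [IsIntegrallyClosed R']
    [Algebra R R'] [Module.FaithfullyFlat R R']
    (I : Ideal R) (h : (I.map (algebraMap R R')).IsPrincipal) :
    I.IsPrincipal := by
  obtain ⟨g, hg⟩ := h
  rw [Ideal.submodule_span_eq] at hg
  by_cases hx : ∃ x ∈ I, Ideal.span {algebraMap R R' x} = Ideal.span {g}
  · obtain ⟨x, -, hx⟩ := hx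
    refine ⟨x, ?_⟩
    rw [Ideal.submodule_span_eq, ← Ideal.comap_map_eq_self_of_faithfullyFlat (B := R') I,
      ← Ideal.comap_map_eq_self_of_faithfullyFlat (B := R') (Ideal.span {x}), hg,
      Ideal.map_span, Set.image_singleton, hx]
  · -- otherwise `I R'` lies in `m' g`, which forces `g = 0`
    push Not at hx
    have hle : I.map (algebraMap R R') ≤ IsLocalRing.maximalIdeal R' * Ideal.span {g} := by
      rw [Ideal.map_le_iff_le_comap]
      intro x hxI
      have h1 : algebraMap R R' x ∈ Ideal.span {g} := hg ▸ Ideal.mem_map_of_mem _ hxI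
      obtain ⟨c, hc⟩ := Ideal.mem_span_singleton'.1 h1
      rw [Ideal.mem_comap, ← hc]
      refine Ideal.mul_mem_mul ?_ (Ideal.mem_span_singleton_self g)
      rw [IsLocalRing.mem_maximalIdeal, mem_nonunits_iff]
      intro hu
      apply hx x hxI
      rw [← hc]
      exact Ideal.span_singleton_mul_left_unit hu g
    have hgm : g ∈ IsLocalRing.maximalIdeal R' * Ideal.span {g} :=
      hle (hg ▸ Ideal.mem_span_singleton_self g)
    obtain ⟨m, hm, hmg⟩ := Ideal.mem_mul_span_singleton.1 hgm
    have hg0 : g = 0 := by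
      by_contra hne
      have : m = 1 := mul_right_cancel₀ hne (by rw [hmg, one_mul])
      subst this
      exact (IsLocalRing.mem_maximalIdeal _).1 hm isUnit_one
    exact absurd (by simp [hg0]) (hx 0 I.zero_mem)
end

section
/- Let R → R' be a faithfully flat homomorphism of Noetherian, integrally closed local domains. If R' is a unique factorization domain, then R is a unique factorization domain. -/
/-- (Lemma 3.3 of the paper, "in particular" part.)
Let `R → R'` be a faithfully flat homomorphism of Noetherian, integrally closed local
domains. If `R'` is a unique factorization domain, then so is `R`. -/
theorem uniqueFactorizationMonoid_of_faithfullyFlat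
    (R R' : Type*) [CommRing R] [CommRing R'] [IsDomain R] [IsDomain R']
    [IsNoetherianRing R] [IsNoetherianRing R']
    [IsLocalRing R] [IsLocalRing R']
    [IsIntegrallyClosed R] [IsIntegrallyClosed R']
    [Algebra R R'] [Module.FaithfullyFlat R R']
    [UniqueFactorizationMonoid R'] :
    UniqueFactorizationMonoid R := by
  -- divisibility descends along the faithfully flat map
  have desc : ∀ x y : R, algebraMap R R' x ∣ algebraMap R R' y → x ∣ y := by
    intro x y h
    have h1 : y ∈ ((Ideal.span {x}).map (algebraMap R R')).comap (algebraMap R R') := by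
      rw [Ideal.mem_comap, Ideal.map_span, Set.image_singleton, Ideal.mem_span_singleton]
      exact h
    rw [Ideal.comap_map_eq_self_of_faithfullyFlat] at h1
    exact Ideal.mem_span_singleton.mp h1
  refine { irreducible_iff_prime := fun {p} => ⟨fun hp => ?_, Prime.irreducible⟩ }
  refine ⟨hp.ne_zero, hp.not_isUnit, fun a b hab => ?_⟩
  have hinj : Function.Injective (algebraMap R R') := FaithfulSMul.algebraMap_injective R R'
  have hp0 : algebraMap R R' p ≠ 0 := fun h => hp.ne_zero (hinj (by rw [h, map_zero]))
  obtain ⟨t, s, g, hrel, hgt, hgs⟩ :=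
    UniqueFactorizationMonoid.exists_reduced_factors (algebraMap R R' p) hp0 (algebraMap R R' a)
  have hg0 : g ≠ 0 := fun h => hp0 (by rw [← hgt, h, zero_mul])
  have ht0 : t ≠ 0 := fun h => hp0 (by rw [← hgt, h, mul_zero])
  -- `t` divides every element of the colon ideal
  have hdiv : ∀ x : R, p ∣ x * a → t ∣ algebraMap R R' x := by
    intro x hx
    have h1 := map_dvd (algebraMap R R') hx
    rw [map_mul, ← hgt, ← hgs, mul_left_comm] at h1
    exact hrel.dvd_of_dvd_mul_right ((mul_dvd_mul_iff_left hg0).mp h1)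
  -- flatness: `t` lies in the extension of the colon ideal
  have hsum : ∑ i, (![a, -p] : Fin 2 → R) i • (![t, s] : Fin 2 → R') i = 0 := by
    simp only [Fin.sum_univ_two, Matrix.cons_val_zero, Matrix.cons_val_one, Algebra.smul_def,
      map_neg, ← hgt, ← hgs]
    ring
  obtain ⟨k, c, y, hc, hz⟩ :=
    Module.Flat.isTrivialRelation_of_sum_smul_eq_zero (R := R) (M := R') (f := ![a, -p])
      (x := ![t, s]) hsum
  have hcol : ∀ j, p ∣ c 0 j * a := by
    intro j
    have := hz j
    simp only [Fin.sum_univ_two, Matrix.cons_val_zero, Matrix.cons_val_one] at this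
    exact ⟨c 1 j, by linear_combination this⟩
  have ht : t = ∑ j, c 0 j • y j := by simpa using hc 0
  choose u hu using fun j => hdiv _ (hcol j)
  have h1 : ∑ j, u j * y j = 1 := by
    apply mul_left_cancel₀ ht0
    rw [mul_one, Finset.mul_sum]
    conv_rhs => rw [ht]
    exact Finset.sum_congr rfl fun j _ => by rw [Algebra.smul_def, hu, mul_assoc]
  obtain ⟨j, hj⟩ : ∃ j, IsUnit (u j) := by
    by_contra! h
    have h2 : (1 : R') ∈ IsLocalRing.maximalIdeal R' := by
      rw [← h1]
      exact Ideal.sum_mem _ fun j _ => Ideal.mul_mem_right _ _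
        ((IsLocalRing.mem_maximalIdeal _).mpr (h j))
    exact (IsLocalRing.mem_maximalIdeal _).mp h2 isUnit_one
  -- hence `c 0 j` generates the colon ideal
  have hgen : ∀ x : R, p ∣ x * a → c 0 j ∣ x := by
    intro x hx
    apply desc
    rw [hu, hj.mul_right_dvd]
    exact hdiv x hx
  have hjb : c 0 j ∣ b := hgen b (by rwa [mul_comm])
  rcases hp.dvd_iff.mp (hgen p (dvd_mul_right p a)) with h | h
  · left
    exact (h.dvd_mul_left).mp (hcol j)
  · right
    exact h.dvd.trans hjb
end

section
/- Let R be a strictly henselian local ring, let R → A be an integral local homomorphism of local rings whose induced extension of residue fields k_R → k_A is purely inseparable, and let R → B be any local homomorphism of local rings. Then the tensor product A ⊗_R B is a local ring, and its residue field is a purely inseparable extension of the residue field k_B of B. -/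
open scoped TensorProduct
open IsLocalRing

/-- The tensor product is nontrivial. -/
theorem nontrivial_tensor_aux
    (R A B : Type*) [CommRing R] [CommRing A] [CommRing B]
    [IsLocalRing R] [IsLocalRing A] [IsLocalRing B]
    [Algebra R A] [Algebra R B]
    [IsLocalHom (algebraMap R A)] [IsLocalHom (algebraMap R B)] :
    Nontrivial (A ⊗[R] B) := by
  let C := ResidueField A ⊗[ResidueField R] ResidueField B
  have : Nontrivial C := inferInstance
  let fA : A →+* C := (Algebra.TensorProduct.includeLeft :
    ResidueField A →ₐ[ResidueField R] C).toRingHom.comp (residue A)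
  let fB : B →+* C := (Algebra.TensorProduct.includeRight :
    ResidueField B →ₐ[ResidueField R] C).toRingHom.comp (residue B)
  have hA : ∀ r, fA (algebraMap R A r) = algebraMap (ResidueField R) C (residue R r) := fun r =>
    (Algebra.TensorProduct.includeLeft :
      ResidueField A →ₐ[ResidueField R] C).commutes (residue R r)
  have hB : ∀ r, fB (algebraMap R B r) = algebraMap (ResidueField R) C (residue R r) := fun r =>
    (Algebra.TensorProduct.includeRight :
      ResidueField B →ₐ[ResidueField R] C).commutes (residue R r)
  clear_value fA fB
  letI : Algebra R C := ((algebraMap (ResidueField R) C).comp (residue R)).toAlgebra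
  let gA : A →ₐ[R] C := { fA with commutes' := hA }
  let gB : B →ₐ[R] C := { fB with commutes' := hB }
  exact (Algebra.TensorProduct.productMap gA gB).toRingHom.domain_nontrivial

/-- (Lemma 4.2 of the paper.)
Let `R` be a strictly henselian local ring (henselian with separably closed residue
field), let `R → A` be an integral local homomorphism of local rings whose induced
residue field extension `k_R → k_A` is purely inseparable, and let `R → B` be any local
homomorphism of local rings. Then `A ⊗_R B` is a local ring, and its residue field is a
purely inseparable extension of the residue field `k_B` of `B` (via the natural map
`B → A ⊗_R B`, which is a local homomorphism). -/
theorem isLocalRing_tensorProduct_of_integral_purelyInseparable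
    (R A B : Type*) [CommRing R] [CommRing A] [CommRing B]
    [IsLocalRing A] [IsLocalRing B]
    [HenselianLocalRing R] [IsSepClosed (ResidueField R)]
    [Algebra R A] [Algebra R B]
    [IsLocalHom (algebraMap R A)] [IsLocalHom (algebraMap R B)]
    [Algebra.IsIntegral R A]
    (hins :
      letI : Algebra (ResidueField R) (ResidueField A) :=
        (ResidueField.map (algebraMap R A)).toAlgebra
      IsPurelyInseparable (ResidueField R) (ResidueField A)) :
    ∃ _hloc : IsLocalRing (A ⊗[R] B),
      ∃ _hl : IsLocalHom
          (Algebra.TensorProduct.includeRight : B →ₐ[R] A ⊗[R] B).toRingHom,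
        letI : Algebra (ResidueField B) (ResidueField (A ⊗[R] B)) :=
          (ResidueField.map
            (Algebra.TensorProduct.includeRight : B →ₐ[R] A ⊗[R] B).toRingHom).toAlgebra
        IsPurelyInseparable (ResidueField B) (ResidueField (A ⊗[R] B)) := by
  obtain ⟨q, hq⟩ := ExpChar.exists (ResidueField R)
  have hq0 : q ≠ 0 := (expChar_pos (ResidueField R) q).ne'
  have hpow : ∀ a : A, ∃ n : ℕ, ∃ r : R, a ^ q ^ n - algebraMap R A r ∈ maximalIdeal A := by
    intro a
    letI : Algebra (ResidueField R) (ResidueField A) :=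
        (ResidueField.map (algebraMap R A)).toAlgebra
    obtain ⟨n, s, hs⟩ := (isPurelyInseparable_iff_pow_mem (ResidueField R) q).1 hins (residue A a)
    obtain ⟨r, rfl⟩ := residue_surjective s
    refine ⟨n, r, ?_⟩
    rw [← residue_eq_zero_iff, map_sub, map_pow, ← hs, sub_eq_zero]
    rfl
  have hnt : Nontrivial (A ⊗[R] B) := nontrivial_tensor_aux R A B
  let iA : A →+* A ⊗[R] B := (Algebra.TensorProduct.includeLeft : A →ₐ[R] A ⊗[R] B).toRingHom
  let iB : B →+* A ⊗[R] B := (Algebra.TensorProduct.includeRight : B →ₐ[R] A ⊗[R] B).toRingHom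
  have hcomp : iA.comp (algebraMap R A) = iB.comp (algebraMap R B) := by
    ext r
    exact ((Algebra.TensorProduct.includeLeft : A →ₐ[R] A ⊗[R] B).commutes r).trans
      ((Algebra.TensorProduct.includeRight : B →ₐ[R] A ⊗[R] B).commutes r).symm
  have hmul : ∀ a b, a ⊗ₜ[R] b = iA a * iB b := by
    intro a b
    simp [iA, iB]
  have hint : iB.IsIntegral := by
    intro t
    induction t with
    | zero => exact RingHom.isIntegralElem_zero _
    | add x y hx hy => exact hx.add _ hy
    | tmul a b =>
      rw [hmul]
      refine RingHom.IsIntegralElem.mul _ ?_ (RingHom.isIntegralElem_map _)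
      obtain ⟨p, hp, hpa⟩ := Algebra.IsIntegral.isIntegral (R := R) a
      refine ⟨p.map (algebraMap R B), hp.map _, ?_⟩
      rw [Polynomial.eval₂_map, ← hcomp, ← Polynomial.hom_eval₂, hpa, map_zero]
  have hMB : ∀ M : Ideal (A ⊗[R] B), M.IsMaximal → M.comap iB = maximalIdeal B := by
    intro M hM
    exact eq_maximalIdeal (Ideal.isMaximal_comap_of_isIntegral_of_isMaximal' iB hint M)
  have hMA : ∀ M : Ideal (A ⊗[R] B), M.IsMaximal → M.comap iA = maximalIdeal A := by
    intro M hM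
    have h1 : (M.comap iA).comap (algebraMap R A) = maximalIdeal R := by
      rw [Ideal.comap_comap, hcomp, ← Ideal.comap_comap, hMB M hM]
      exact ((local_hom_TFAE (algebraMap R B)).out 0 4).1 (inferInstance : IsLocalHom (algebraMap R B))
    have : (M.comap iA).IsPrime := inferInstance
    exact eq_maximalIdeal (Ideal.isMaximal_of_isIntegral_of_isMaximal_comap _
      (by rw [h1]; infer_instance))
  let J : Ideal (A ⊗[R] B) := Ideal.jacobson ⊥
  have hJ : ∀ x, x ∈ J ↔ ∀ M : Ideal (A ⊗[R] B), M.IsMaximal → x ∈ M := by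
    intro x
    simp [J, Ideal.jacobson, Ideal.mem_sInf]
  have hAJ : ∀ a ∈ maximalIdeal A, iA a ∈ J := by
    intro a ha
    rw [hJ]
    intro M hM
    rw [← hMA M hM] at ha
    exact ha
  have hBJ : ∀ b ∈ maximalIdeal B, iB b ∈ J := by
    intro b hb
    rw [hJ]
    intro M hM
    rw [← hMB M hM] at hb
    exact hb
  let π := Ideal.Quotient.mk J
  have hJtop : J ≠ ⊤ := by
    obtain ⟨M, hM⟩ := Ideal.exists_maximal (A ⊗[R] B)
    intro h
    refine hM.ne_top ((Ideal.eq_top_iff_one _).2 ((hJ 1).1 (h ▸ Submodule.mem_top) M hM))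
  haveI : Nontrivial ((A ⊗[R] B) ⧸ J) := Ideal.Quotient.nontrivial_iff.2 hJtop
  haveI : ExpChar ((A ⊗[R] B) ⧸ J) q := by
    let g : ResidueField R →+* (A ⊗[R] B) ⧸ J :=
      Ideal.Quotient.lift (maximalIdeal R) (π.comp (iA.comp (algebraMap R A))) (by
        intro r hr
        refine Ideal.Quotient.eq_zero_iff_mem.2 (hAJ _ ?_)
        exact ((mem_nonunits_iff).2 fun h => (mem_maximalIdeal _).1 hr
          (isUnit_of_map_unit (algebraMap R A) r h)))
    exact expChar_of_injective_ringHom g.injective q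
  have key : ∀ t : A ⊗[R] B, ∃ n : ℕ, ∃ b : B, π t ^ q ^ n = π (iB b) := by
    intro t
    induction t with
    | zero => exact ⟨0, 0, by simp⟩
    | add x y hx hy =>
      obtain ⟨n, b, hb⟩ := hx
      obtain ⟨m, c, hc⟩ := hy
      refine ⟨n + m, b ^ q ^ m + c ^ q ^ n, ?_⟩
      rw [map_add, add_pow_expChar_pow, pow_add, pow_mul, hb, mul_comm, pow_mul, hc]
      simp only [map_add, map_pow]
    | tmul a b =>
      obtain ⟨n, r, hr⟩ := hpow a
      refine ⟨n, algebraMap R B r * b ^ q ^ n, ?_⟩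
      have h1 : π (iA a) ^ q ^ n = π (iB (algebraMap R B r)) := by
        have h2 := Ideal.Quotient.eq_zero_iff_mem.2 (hAJ _ hr)
        rw [map_sub, map_sub, sub_eq_zero] at h2
        rw [← map_pow, ← map_pow]
        exact h2.trans (congrArg π (RingHom.congr_fun hcomp r))
      rw [hmul, map_mul, mul_pow, h1]
      simp only [map_mul, map_pow]
  have key2 : ∀ M : Ideal (A ⊗[R] B), M.IsMaximal → M = J := by
    intro M hM
    refine le_antisymm (fun t ht => ?_) (fun t ht => (hJ t).1 ht M hM)
    obtain ⟨n, b, hb⟩ := key t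
    rw [← map_pow] at hb
    have hb' := Ideal.Quotient.eq.1 hb
    have hbM : iB b ∈ M := by
      have h3 := (hJ _).1 hb' M hM
      have h4 : t ^ q ^ n ∈ M := M.pow_mem_of_mem ht _ (pow_pos (Nat.pos_of_ne_zero hq0) n)
      simpa using M.sub_mem h4 h3
    have hbB : b ∈ maximalIdeal B := by rw [← hMB M hM]; exact hbM
    have h5 : t ^ q ^ n ∈ J := by simpa using J.add_mem hb' (hBJ b hbB)
    rw [hJ] at h5 ⊢
    exact fun N hN => hN.isPrime.mem_of_pow_mem _ (h5 N hN)
  have hloc : IsLocalRing (A ⊗[R] B) := by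
    obtain ⟨M, hM⟩ := Ideal.exists_maximal (A ⊗[R] B)
    exact IsLocalRing.of_unique_max_ideal ⟨M, hM, fun N hN => (key2 N hN).trans (key2 M hM).symm⟩
  have hJm : maximalIdeal (A ⊗[R] B) = J := key2 _ inferInstance
  have hl : IsLocalHom iB :=
    ((local_hom_TFAE iB).out 0 4).2 (hMB _ inferInstance)
  refine ⟨hloc, hl, ?_⟩
  letI : Algebra (ResidueField B) (ResidueField (A ⊗[R] B)) := (ResidueField.map iB).toAlgebra
  haveI : ExpChar (ResidueField B) q :=
    expChar_of_injective_ringHom (ResidueField.map (algebraMap R B)).injective q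
  refine (isPurelyInseparable_iff_pow_mem (ResidueField B) q).2 ?_
  intro x
  obtain ⟨t, rfl⟩ := residue_surjective x
  obtain ⟨n, b, hb⟩ := key t
  refine ⟨n, residue B b, ?_⟩
  rw [← map_pow] at hb
  have hb' := Ideal.Quotient.eq.1 hb
  rw [← hJm, ← residue_eq_zero_iff, map_sub, sub_eq_zero] at hb'
  rw [← map_pow, hb']
  rfl
end

section
/- Let R be a Noetherian, strictly henselian local domain, let R → R' be a smooth ring map, and let 𝔭 be a prime ideal of R' containing the extended ideal m_R·R'. Then the localization R'_𝔭 is geometrically unibranch; concretely: R'_𝔭 is a domain, and the integral closure of R'_𝔭 in its fraction field is a local ring whose residue field is a purely inseparable extension of the residue field of R'_𝔭. -/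
open IsLocalRing TensorProduct
universe u

theorem exists_section_of_etale (R E : Type u) [CommRing R] [CommRing E] [HenselianLocalRing R]
    [Algebra R E] [Algebra.Etale R E] (P : Ideal E) [P.IsPrime] [P.LiesOver (maximalIdeal R)]
    (H : Function.Bijective (Ideal.ResidueField.mapₐ (maximalIdeal R) P (Algebra.ofId _ _)
      (P.over_def (maximalIdeal R)))) :
    ∃ σ : E →ₐ[R] R, (maximalIdeal R).comap σ = P := by
  obtain ⟨f, hf, hS⟩ := Algebra.IsEtaleAt.exists_isStandardEtale (R := R) P
  have 𝓟 := Classical.ofNonempty (α := StandardEtalePresentation R (Localization.Away f))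
  have hφ : Function.Surjective (algebraMap R P.ResidueField) := by
    intro y
    obtain ⟨z, rfl⟩ := H.2 y
    obtain ⟨r, rfl⟩ := Ideal.algebraMap_residueField_surjective (maximalIdeal R) z
    exact ⟨r, by simp⟩
  let ψ : Localization.Away f →ₐ[R] P.ResidueField :=
    IsLocalization.Away.liftAlgHom f (f := IsScalarTower.toAlgHom R E P.ResidueField)
      (by simpa [isUnit_iff_ne_zero] using hf)
  have hψ : ∀ e, ψ (algebraMap _ _ e) = algebraMap E P.ResidueField e := by
    intro e; simp [ψ]
  have h0 := 𝓟.hasMap.map ψ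
  have hens : ∀ {K : Type u} [Field K] (φ : R →+* K), Function.Surjective φ →
      ∀ f : Polynomial R, f.Monic → ∀ a₀ : K, f.eval₂ φ a₀ = 0 →
        f.derivative.eval₂ φ a₀ ≠ 0 → ∃ a : R, f.IsRoot a ∧ φ a = a₀ :=
    ((HenselianLocalRing.TFAE R).out 0 2 rfl rfl).mp ‹HenselianLocalRing R›
  obtain ⟨a, ha, hax⟩ := hens
    (algebraMap R P.ResidueField) hφ 𝓟.f 𝓟.monic_f (ψ 𝓟.x) h0.1 h0.isUnit_derivative_f.ne_zero
  have hker := ker_eq_maximalIdeal _ hφ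
  have hmap : 𝓟.HasMap a := by
    refine ⟨ha, ?_⟩
    by_contra hcon
    have : Polynomial.aeval a 𝓟.g ∈ RingHom.ker (algebraMap R P.ResidueField) := by
      rw [hker]; exact hcon
    have h2 := h0.2.ne_zero
    rw [RingHom.mem_ker, ← Polynomial.aeval_algebraMap_apply, hax] at this
    exact h2 this
  let τ : Localization.Away f →ₐ[R] R := (𝓟.lift a hmap).comp 𝓟.equivRing.toAlgHom
  have hτ : (Algebra.ofId R P.ResidueField).comp τ = ψ := by
    have : ((Algebra.ofId R P.ResidueField).comp (𝓟.lift a hmap)) =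
      ψ.comp (𝓟.equivRing.symm.toAlgHom) := by
      apply StandardEtalePair.hom_ext
      simp [Algebra.ofId_apply, hax]
    refine AlgHom.ext fun x => ?_
    have := DFunLike.congr_fun this (𝓟.equivRing x)
    simpa [τ] using this
  refine ⟨τ.comp (IsScalarTower.toAlgHom R E _), ?_⟩
  ext e
  rw [Ideal.mem_comap, ← hker, RingHom.mem_ker]
  have := DFunLike.congr_fun hτ (algebraMap _ _ e)
  rw [hψ] at this
  simp only [AlgHom.comp_apply, Algebra.ofId_apply] at this
  simp [this]

theorem eq_of_liesOver_of_finite (R : Type u) (S : Type*) [CommRing R] [CommRing S] [HenselianLocalRing R]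
    [Algebra R S] [Module.Finite R S] [IsDomain S] (q q' : Ideal S) [q.IsPrime] [q'.IsPrime]
    [q.LiesOver (maximalIdeal R)] [q'.LiesOver (maximalIdeal R)] : q = q' := by
  obtain ⟨E, _, _, _, P, _, _, e, he, P', _, _, hq, heP, hbij, -, huniq⟩ :=
    Algebra.exists_etale_isIdempotentElem_forall_liesOver_eq (maximalIdeal R) q
  obtain ⟨σ, hσ⟩ := exists_section_of_etale R E P hbij
  let ρ : E ⊗[R] S →ₐ[R] S := Algebra.TensorProduct.lift ((Algebra.ofId R S).comp σ) (AlgHom.id R S)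
    (fun _ _ => Commute.all _ _)
  have hρ (Q : Ideal S) [Q.LiesOver (maximalIdeal R)] : (Q.comap ρ).LiesOver P := by
    constructor
    rw [← hσ, Q.over_def (maximalIdeal R)]
    ext x
    simp [Ideal.mem_comap, Ideal.under, ρ, Algebra.ofId_apply]
  have hρ2 (Q : Ideal S) :
     (Q.comap ρ).comap Algebra.TensorProduct.includeRight.toRingHom = Q := by
    ext x
    simp [Ideal.mem_comap, ρ]
  have := hρ q
  have := hρ q'
  have h1 : P' = q.comap ρ := Ideal.eq_of_comap_eq_comap_of_bijective_residueFieldMap hbij _ _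
    (hq.trans (hρ2 q).symm)
  have h2 : ρ e ∉ q := by rw [h1] at heP; exact heP
  have h3 : ρ e = 1 := by
    rcases IsIdempotentElem.iff_eq_zero_or_one.mp (he.map ρ) with h | h
    · simp [h] at h2
    · exact h
  have h4 : q'.comap ρ = P' := huniq _ inferInstance inferInstance (by
    rw [Ideal.mem_comap, h3]; exact fun h => Ideal.IsPrime.one_notMem ‹q'.IsPrime› h)
  rw [← hρ2 q, ← hρ2 q', h4, h1]

theorem eq_of_liesOver_of_isIntegral (R : Type u) (S : Type*) [CommRing R] [CommRing S] [HenselianLocalRing R]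
    [Algebra R S] [Algebra.IsIntegral R S] [IsDomain S] (q q' : Ideal S) [q.IsPrime] [q'.IsPrime]
    [q.LiesOver (maximalIdeal R)] [q'.LiesOver (maximalIdeal R)] : q = q' := by
  ext x
  let T := Algebra.adjoin R {x}
  have : Module.Finite R T := ⟨(Submodule.fg_top _).mpr
    ((Algebra.IsIntegral.isIntegral (R := R) x).fg_adjoin_singleton)⟩
  have hl (Q : Ideal S) [Q.LiesOver (maximalIdeal R)] : (Q.under T).LiesOver (maximalIdeal R) := by
    constructor
    rw [Ideal.under_under]
    exact Q.over_def _
  have := hl q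
  have := hl q'
  have h := eq_of_liesOver_of_finite R T (q.under T) (q'.under T)
  exact SetLike.ext_iff.mp h ⟨x, Algebra.self_mem_adjoin_singleton R x⟩

theorem exists_pow_sub_mem (R : Type u) (S : Type*) [CommRing R] [CommRing S] [HenselianLocalRing R]
    [IsSepClosed (ResidueField R)] (p : ℕ) [ExpChar (ResidueField R) p]
    [Algebra R S] [Algebra.IsIntegral R S] [IsDomain S] (x : S) :
    ∃ (n : ℕ) (r : R), ∀ q : Ideal S, q.IsMaximal → x ^ p ^ n - algebraMap R S r ∈ q := by
  have hl (q : Ideal S) (hq : q.IsMaximal) : q.LiesOver (maximalIdeal R) :=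
    ⟨(eq_maximalIdeal (Ideal.isMaximal_comap_of_isIntegral_of_isMaximal q)).symm⟩
  obtain ⟨q, hq⟩ := Ideal.exists_maximal S
  have := hl q hq
  let := Ideal.Quotient.field q
  let : Algebra (ResidueField R) (S ⧸ q) := inferInstanceAs (Algebra (R ⧸ maximalIdeal R) (S ⧸ q))
  have : IsScalarTower R (ResidueField R) (S ⧸ q) := inferInstanceAs (IsScalarTower R (R ⧸ maximalIdeal R) (S ⧸ q))
  have : Algebra.IsIntegral R (S ⧸ q) := inferInstance
  have : Algebra.IsIntegral (ResidueField R) (S ⧸ q) := Algebra.IsIntegral.tower_top R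
  have : IsPurelyInseparable (ResidueField R) (S ⧸ q) := inferInstance
  obtain ⟨n, y, hy⟩ := (isPurelyInseparable_iff_pow_mem (ResidueField R) p).mp this (Ideal.Quotient.mk q x)
  obtain ⟨r, rfl⟩ := residue_surjective y
  refine ⟨n, r, fun q' hq' => ?_⟩
  have := hl q' hq'
  rw [eq_of_liesOver_of_isIntegral R S q' q, ← Ideal.Quotient.eq, map_pow, ← hy]
  rfl

theorem maximal_over {A C : Type*} [CommRing A] [CommRing C] [Algebra A C] [IsLocalRing A]
    [Algebra.IsIntegral A C] (M : Ideal C) (hM : M.IsMaximal) (a : A) :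
    algebraMap A C a ∈ M ↔ a ∈ maximalIdeal A := by
  rw [← Ideal.mem_comap, eq_maximalIdeal (Ideal.isMaximal_comap_of_isIntegral_of_isMaximal M)]

theorem unibranch_of_pow (A C : Type*) [CommRing A] [CommRing C] [Algebra A C] [IsLocalRing A]
    [Algebra.IsIntegral A C] [Nontrivial C] (p : ℕ) [ExpChar (ResidueField A) p]
    (H : ∀ c : C, ∃ (n : ℕ) (a : A), ∀ M : Ideal C, M.IsMaximal →
      c ^ p ^ n - algebraMap A C a ∈ M) :
    ∃ _hloc : IsLocalRing C, ∃ _hl : IsLocalHom (algebraMap A C),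
      @IsPurelyInseparable (ResidueField A) (ResidueField C) _ _
        (ResidueField.map (algebraMap A C)).toAlgebra := by
  have hp : ∀ n, p ^ n ≠ 0 := fun n => pow_ne_zero _ (expChar_pos (ResidueField A) p).ne'
  have key (M M' : Ideal C) (hM : M.IsMaximal) (hM' : M'.IsMaximal) : M ≤ M' := by
    intro c hc
    obtain ⟨n, a, h⟩ := H c
    have h1 : algebraMap A C a ∈ M := by
      have := M.sub_mem (Ideal.pow_mem_of_mem M hc (p ^ n) (Nat.pos_of_ne_zero (hp n))) (h M hM)
      simpa using this
    have h2 : algebraMap A C a ∈ M' := by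
      rw [maximal_over M' hM', ← maximal_over M hM]; exact h1
    have := M'.add_mem (h M' hM') h2
    rw [sub_add_cancel] at this
    exact hM'.isPrime.mem_of_pow_mem _ this
  obtain ⟨M, hM⟩ := Ideal.exists_maximal C
  have hloc : IsLocalRing C := .of_unique_max_ideal
    ⟨M, hM, fun M' hM' => le_antisymm (key _ _ hM' hM) (key _ _ hM hM')⟩
  have hl : IsLocalHom (algebraMap A C) := by
    refine ⟨fun a ha => ?_⟩
    by_contra h
    exact (maximal_over (maximalIdeal C) inferInstance a).mpr h ha
  refine ⟨hloc, hl, ?_⟩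
  let : Algebra (ResidueField A) (ResidueField C) := (ResidueField.map (algebraMap A C)).toAlgebra
  refine (isPurelyInseparable_iff_pow_mem (ResidueField A) p).mpr fun x => ?_
  obtain ⟨c, rfl⟩ := residue_surjective x
  obtain ⟨n, a, h⟩ := H c
  refine ⟨n, residue A a, ?_⟩
  have := h (maximalIdeal C) inferInstance
  rw [← residue_eq_zero_iff, map_sub, sub_eq_zero, map_pow] at this
  rw [this]
  rfl

attribute [local instance] MvPolynomial.algebraMvPolynomial in
theorem mem_adjoin_of_isIntegral (R F : Type*) [CommRing R] [IsDomain R] [Field F] (n : ℕ)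
    [Algebra R F] [Algebra (MvPolynomial (Fin n) R) F] [IsScalarTower R (MvPolynomial (Fin n) R) F]
    [IsFractionRing (MvPolynomial (Fin n) R) F] (y : F) (hy : IsIntegral (MvPolynomial (Fin n) R) y) :
    y ∈ Algebra.adjoin (MvPolynomial (Fin n) R) {c : F | IsIntegral R c} := by
  let K := FractionRing R
  let M := (nonZeroDivisors R).map (MvPolynomial.C (σ := Fin n))
  have hinj := IsFractionRing.injective (MvPolynomial (Fin n) R) F
  have hloc : IsLocalization M (MvPolynomial (Fin n) K) := inferInstance
  have hu : ∀ m : M, IsUnit (algebraMap (MvPolynomial (Fin n) R) F m) := by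
    rintro ⟨_, r, hr, rfl⟩
    rw [isUnit_iff_ne_zero]
    intro h
    have := (map_eq_zero_iff _ hinj).mp h
    exact nonZeroDivisors.ne_zero hr ((map_eq_zero_iff _ (MvPolynomial.C_injective _ _)).mp this)
  let : Algebra (MvPolynomial (Fin n) K) F := (IsLocalization.lift hu).toAlgebra
  have : IsScalarTower (MvPolynomial (Fin n) R) (MvPolynomial (Fin n) K) F :=
    .of_algebraMap_eq fun x => (IsLocalization.lift_eq hu x).symm
  have : IsFractionRing (MvPolynomial (Fin n) K) F :=
    IsFractionRing.isFractionRing_of_isDomain_of_isLocalization M _ _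
  have : IsScalarTower R (MvPolynomial (Fin n) K) F := .of_algebraMap_eq fun x => by
    rw [IsScalarTower.algebraMap_apply R (MvPolynomial (Fin n) R) F,
      IsScalarTower.algebraMap_apply (MvPolynomial (Fin n) R) (MvPolynomial (Fin n) K) F]
    simp [MvPolynomial.algebraMap_eq, IsScalarTower.algebraMap_apply R K (MvPolynomial (Fin n) K)]
  obtain ⟨z, rfl⟩ := IsIntegrallyClosed.isIntegral_iff.mp (hy.tower_top (A := MvPolynomial (Fin n) K))
  have hz := (isIntegral_algebraMap_iff (IsFractionRing.injective (MvPolynomial (Fin n) K) F)).mp hy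
  rw [MvPolynomial.isIntegral_iff_isIntegral_coeff] at hz
  rw [z.as_sum, map_sum]
  refine Subalgebra.sum_mem _ fun s _ => ?_
  have : MvPolynomial.monomial s (z.coeff s) = MvPolynomial.C (z.coeff s) *
    algebraMap (MvPolynomial (Fin n) R) _ (MvPolynomial.monomial s 1) := by
    simp [MvPolynomial.C_mul_monomial]
  rw [this, map_mul, ← IsScalarTower.algebraMap_apply]
  refine Subalgebra.mul_mem _ (Algebra.subset_adjoin ?_) (Subalgebra.algebraMap_mem _ _)
  have h1 := (hz s).map (IsScalarTower.toAlgHom R K (MvPolynomial (Fin n) K))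
  exact h1.map (IsScalarTower.toAlgHom R (MvPolynomial (Fin n) K) F)


/-- Some `p`-power of `c` agrees with an element of `A` modulo every maximal ideal of `B`. -/
def PowCongr (p : ℕ) (A : Type*) {B : Type*} [CommRing A] [CommRing B] [Algebra A B] (c : B) :
    Prop :=
  ∃ (m : ℕ) (a : A), ∀ M : Ideal B, M.IsMaximal → c ^ p ^ m - algebraMap A B a ∈ M

theorem PowCongr.algebraMap (p : ℕ) {A B : Type*} [CommRing A] [CommRing B] [Algebra A B] (a : A) :
    PowCongr p A (algebraMap A B a) := ⟨0, a, fun M _ => by simp⟩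

theorem PowCongr.add {p : ℕ} {A B : Type*} [CommRing A] [CommRing B] [Algebra A B]
    (hexp : ∀ (M : Ideal B) (_ : M.IsMaximal), ExpChar (B ⧸ M) p)
    {x y : B} (hx : PowCongr p A x) (hy : PowCongr p A y) : PowCongr p A (x + y) := by
  obtain ⟨m, a, h⟩ := hx
  obtain ⟨m', a', h'⟩ := hy
  refine ⟨m + m', a ^ p ^ m' + a' ^ p ^ m, fun M hM => ?_⟩
  have := hexp M hM
  have h1 := h M hM
  have h2 := h' M hM
  rw [← Ideal.Quotient.eq] at h1 h2 ⊢
  simp only [map_pow, map_add] at h1 h2 ⊢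
  rw [add_pow_expChar_pow, ← h1, ← h2, ← pow_mul, ← pow_mul, ← pow_add, ← pow_add, add_comm m' m]

theorem PowCongr.mul {p : ℕ} {A B : Type*} [CommRing A] [CommRing B] [Algebra A B]
    {x y : B} (hx : PowCongr p A x) (hy : PowCongr p A y) : PowCongr p A (x * y) := by
  obtain ⟨m, a, h⟩ := hx
  obtain ⟨m', a', h'⟩ := hy
  refine ⟨m + m', a ^ p ^ m' * a' ^ p ^ m, fun M hM => ?_⟩
  have h1 := h M hM
  have h2 := h' M hM
  rw [← Ideal.Quotient.eq] at h1 h2 ⊢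
  simp only [map_pow, map_mul] at h1 h2 ⊢
  rw [mul_pow, ← h1, ← h2, ← pow_mul, ← pow_mul, ← pow_add, ← pow_add, add_comm m' m]

theorem PowCongr.map_equiv {p : ℕ} {A B B' : Type*} [CommRing A] [CommRing B] [Algebra A B]
    [CommRing B'] [Algebra A B'] (e : B ≃ₐ[A] B')
    {x : B} (hx : PowCongr p A x) : PowCongr p A (e x) := by
  obtain ⟨m, a, h⟩ := hx
  refine ⟨m, a, fun M hM => ?_⟩
  have := h (M.comap e) (Ideal.comap_isMaximal_of_equiv e)
  simpa [Ideal.mem_comap] using this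

theorem powCongr_tensor (R P A F : Type u) [CommRing R] [IsDomain R] [HenselianLocalRing R]
    [IsSepClosed (ResidueField R)] [CommRing A] [IsLocalRing A] [Algebra R A]
    [IsLocalHom (algebraMap R A)] [CommRing P] [Algebra R P] [Algebra P A]
    [IsScalarTower R P A] [Field F] [Algebra R F]
    [Algebra P F] [IsScalarTower R P F] (p : ℕ) [ExpChar (ResidueField R) p]
    (hadj : ∀ y : F, IsIntegral P y → y ∈ Algebra.adjoin P {c : F | IsIntegral R c})
    (c : A ⊗[P] integralClosure P F) : PowCongr p A c := by
  let B := A ⊗[P] integralClosure P F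
  have hint : Algebra.IsIntegral A B := inferInstance
  have hR (M : Ideal B) (hM : M.IsMaximal) (r : R) : algebraMap R B r ∈ M ↔ r ∈ maximalIdeal R := by
    rw [IsScalarTower.algebraMap_apply R A B, maximal_over M hM]
    exact ((local_hom_TFAE (algebraMap R A)).out 0 4).mp ‹_› ▸ Iff.rfl
  have hexp (M : Ideal B) (hM : M.IsMaximal) : ExpChar (B ⧸ M) p := by
    have : Nontrivial (B ⧸ M) := Ideal.Quotient.nontrivial_iff.mpr hM.ne_top
    let φ : ResidueField R →+* B ⧸ M := Ideal.Quotient.lift (maximalIdeal R)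
      ((Ideal.Quotient.mk M).comp (algebraMap R B)) fun r hr => by
        rw [RingHom.comp_apply, Ideal.Quotient.eq_zero_iff_mem]
        exact (hR M hM r).mpr hr
    exact expChar_of_injective_ringHom φ.injective p
  let N := integralClosure R F
  let ι : N →ₐ[R] B := ((Algebra.TensorProduct.includeRight :
      integralClosure P F →ₐ[P] B).restrictScalars R).comp
    (Subalgebra.inclusion (S := N) (T := (integralClosure P F).restrictScalars R)
      (fun x hx => IsIntegral.tower_top (R := R) (A := P) hx))
  have hN (x : N) : PowCongr p A (ι x) := by
    obtain ⟨m, r, h⟩ := exists_pow_sub_mem R N p x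
    refine ⟨m, algebraMap R A r, fun M hM => ?_⟩
    have hpr : (M.comap ι).IsPrime := Ideal.comap_isPrime ι M
    have hmax : (M.comap ι).IsMaximal := by
      refine Ideal.isMaximal_of_isIntegral_of_isMaximal_comap (R := R) _ ?_
      convert maximalIdeal.isMaximal R
      ext r
      simp only [Ideal.mem_comap, AlgHom.commutes, hR M hM]
    have := h _ hmax
    rw [Ideal.mem_comap, map_sub, map_pow, AlgHom.commutes] at this
    rwa [← IsScalarTower.algebraMap_apply]
  let j : integralClosure P F →ₐ[P] B := Algebra.TensorProduct.includeRight
  have hy (y : integralClosure P F) : PowCongr p A (j y) := by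
    obtain ⟨y, hy⟩ := y
    have := hadj y hy
    suffices ∃ hy' : y ∈ integralClosure P F, PowCongr p A (j ⟨y, hy'⟩) from this.2
    clear hy
    induction this using Algebra.adjoin_induction with
    | mem x hx => exact ⟨IsIntegral.tower_top (R := R) hx, hN ⟨x, hx⟩⟩
    | algebraMap r =>
      refine ⟨Subalgebra.algebraMap_mem _ r, ?_⟩
      convert PowCongr.algebraMap (B := B) p (algebraMap P A r) using 1
      rw [← IsScalarTower.algebraMap_apply]
      exact j.commutes r
    | add x y hx hy h1 h2 =>
      obtain ⟨i1, j1⟩ := h1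
      obtain ⟨i2, j2⟩ := h2
      refine ⟨add_mem i1 i2, ?_⟩
      convert PowCongr.add hexp j1 j2 using 1
      exact map_add j ⟨x, i1⟩ ⟨y, i2⟩
    | mul x y hx hy h1 h2 =>
      obtain ⟨i1, j1⟩ := h1
      obtain ⟨i2, j2⟩ := h2
      refine ⟨mul_mem i1 i2, ?_⟩
      convert PowCongr.mul j1 j2 using 1
      exact map_mul j ⟨x, i1⟩ ⟨y, i2⟩
  induction c using TensorProduct.induction_on with
  | zero =>
    have := PowCongr.algebraMap (B := B) p (0 : A)
    rwa [map_zero] at this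
  | add x y hx hy => exact hx.add hexp hy
  | tmul a y =>
    have := PowCongr.mul (PowCongr.algebraMap (B := B) p a) (hy y)
    simpa [B, j, Algebra.TensorProduct.algebraMap_apply] using this

theorem unibranch_aux (R P A F : Type u) [CommRing R] [IsDomain R] [HenselianLocalRing R]
    [IsSepClosed (ResidueField R)] [CommRing A] [IsLocalRing A] [Algebra R A]
    [IsLocalHom (algebraMap R A)] [CommRing P] [Algebra R P] [Algebra P A]
    [IsScalarTower R P A] [Field F] [Algebra R F]
    [Algebra P F] [IsScalarTower R P F] [IsDomain P] [IsFractionRing P F]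
    (hadj : ∀ y : F, IsIntegral P y → y ∈ Algebra.adjoin P {c : F | IsIntegral R c})
    [Algebra.FormallyUnramified P A] [Algebra.EssFiniteType P A] [Module.Flat P A]
    (hbij : Function.Bijective (TensorProduct.toIntegralClosure P A F)) :
    ∃ _hdom : IsDomain A,
      ∃ _hloc : IsLocalRing (integralClosure A (FractionRing A)),
        ∃ _hl : IsLocalHom (algebraMap A (integralClosure A (FractionRing A))),
          @IsPurelyInseparable (ResidueField A)
            (ResidueField (integralClosure A (FractionRing A))) _ _
            (ResidueField.map
              (algebraMap A (integralClosure A (FractionRing A)))).toAlgebra := by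
  obtain ⟨p, hp⟩ := ExpChar.exists (ResidueField R)
  have hpA : ExpChar (ResidueField A) p :=
    expChar_of_injective_ringHom (ResidueField.map (algebraMap R A)).injective p
  have hC (c : integralClosure A (A ⊗[P] F)) : PowCongr p A c := by
    obtain ⟨b, rfl⟩ := hbij.2 c
    exact (powCongr_tensor R P A F p hadj b).map_equiv (AlgEquiv.ofBijective _ hbij)
  have hinj : Function.Injective (algebraMap A (A ⊗[P] F)) :=
    Algebra.TensorProduct.includeLeft_injective (S := A) (IsFractionRing.injective P F)
  have hnt : Nontrivial (A ⊗[P] F) := hinj.nontrivial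
  have hloc := (unibranch_of_pow A (integralClosure A (A ⊗[P] F)) p hC).1
  let := Algebra.TensorProduct.rightAlgebra (R := P) (A := A) (B := F)
  let e₀ : F ⊗[P] A ≃ₐ[F] A ⊗[P] F :=
    { Algebra.TensorProduct.comm P F A with commutes' := fun r => rfl }
  have : Module.Finite F (F ⊗[P] A) := Algebra.FormallyUnramified.finite_of_free F _
  have : IsReduced (F ⊗[P] A) := Algebra.FormallyUnramified.isReduced_of_field F _
  have : Module.Finite F (A ⊗[P] F) := Module.Finite.equiv e₀.toLinearEquiv
  have : IsReduced (A ⊗[P] F) := isReduced_of_injective e₀.symm e₀.symm.injective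
  have : IsArtinianRing (A ⊗[P] F) := .of_finite F _
  have hidem (e : A ⊗[P] F) (he : IsIdempotentElem e) : e = 0 ∨ e = 1 := by
    have hi : IsIntegral A e := ⟨Polynomial.X ^ 2 - Polynomial.X, by monicity!, by
      simp [pow_two, he.eq]⟩
    have he' : IsIdempotentElem (⟨e, hi⟩ : integralClosure A (A ⊗[P] F)) := Subtype.ext he
    have h1 : e * (1 - e) = 0 := by rw [mul_sub, he.eq, mul_one, sub_self]
    rcases IsLocalRing.isUnit_or_isUnit_one_sub_self
      (⟨e, hi⟩ : integralClosure A (A ⊗[P] F)) with h | h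
    · right
      have h2 : IsUnit e := h.map (integralClosure A (A ⊗[P] F)).val
      exact (sub_eq_zero.mp (h2.mul_right_eq_zero.mp h1)).symm
    · left
      have h2 : IsUnit (1 - e) := h.map (integralClosure A (A ⊗[P] F)).val
      exact h2.mul_left_eq_zero.mp h1
  have hfield : IsField (A ⊗[P] F) := by
    refine ⟨exists_pair_ne _, mul_comm, fun {x} hx => ?_⟩
    obtain ⟨n, y, hy⟩ := IsArtinian.exists_pow_succ_smul_dvd x (1 : A ⊗[P] F)
    simp only [smul_eq_mul, mul_one, Nat.succ_eq_add_one] at hy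
    have h0 : x * (x * y - 1) = 0 := by
      refine eq_zero_of_pow_eq_zero (n := n + 1) ?_
      calc (x * (x * y - 1)) ^ (n + 1) = (x ^ (n + 1) * y - x ^ n) * (x * (x * y - 1) ^ n) := by
            rw [mul_pow]; ring
        _ = 0 := by rw [hy, sub_self, zero_mul]
    have h1 : x * (x * y) = x := by rwa [mul_sub, mul_one, sub_eq_zero] at h0
    refine ⟨y, (hidem (x * y) ?_).resolve_left fun h => hx ?_⟩
    · calc x * y * (x * y) = x * (x * y) * y := by ring
        _ = x * y := by rw [h1]
    · rw [← h1, h, mul_zero]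
  let := hfield.toField
  have hdom : IsDomain A := hinj.isDomain (algebraMap A (A ⊗[P] F))
  have hloc : IsLocalization (Algebra.algebraMapSubmonoid A (nonZeroDivisors P)) (A ⊗[P] F) := inferInstance
  have : IsFractionRing A (A ⊗[P] F) := by
    have : FaithfulSMul A (A ⊗[P] F) := (faithfulSMul_iff_algebraMap_injective _ _).mpr hinj
    refine IsFractionRing.of_field _ _ fun z => ?_
    obtain ⟨⟨x, s⟩, hx⟩ :=
      IsLocalization.surj (Algebra.algebraMapSubmonoid A (nonZeroDivisors P)) z
    exact ⟨x, s, (eq_div_iff (IsLocalization.map_units (A ⊗[P] F) s).ne_zero).mpr hx⟩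
  let e : integralClosure A (A ⊗[P] F) ≃ₐ[A] integralClosure A (FractionRing A) :=
    AlgEquiv.mapIntegralClosure (FractionRing.algEquiv A (A ⊗[P] F)).symm
  refine ⟨hdom, unibranch_of_pow A _ p fun c => ?_⟩
  have := (hC (e.symm c)).map_equiv e
  rwa [e.apply_symm_apply] at this

theorem localization_geometrically_unibranch_of_smooth
    (R R' : Type u) [CommRing R] [CommRing R'] [IsDomain R] [IsNoetherianRing R]
    [HenselianLocalRing R] [IsSepClosed (ResidueField R)]
    [Algebra R R'] [Algebra.Smooth R R']
    (𝔭 : Ideal R') [𝔭.IsPrime]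
    (h𝔭 : (maximalIdeal R).map (algebraMap R R') ≤ 𝔭) :
    ∃ _hdom : IsDomain (Localization.AtPrime 𝔭),
      ∃ _hloc : IsLocalRing
          (integralClosure (Localization.AtPrime 𝔭)
            (FractionRing (Localization.AtPrime 𝔭))),
        ∃ _hl : IsLocalHom
            (algebraMap (Localization.AtPrime 𝔭)
              (integralClosure (Localization.AtPrime 𝔭)
                (FractionRing (Localization.AtPrime 𝔭)))),
          @IsPurelyInseparable
            (ResidueField (Localization.AtPrime 𝔭))
            (ResidueField
              (integralClosure (Localization.AtPrime 𝔭)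
                (FractionRing (Localization.AtPrime 𝔭)))) _ _
            (ResidueField.map
              (algebraMap (Localization.AtPrime 𝔭)
                (integralClosure (Localization.AtPrime 𝔭)
                  (FractionRing (Localization.AtPrime 𝔭))))).toAlgebra := by
  obtain ⟨f, hf, n, _, _, _⟩ :=
    Algebra.IsSmoothAt.exists_isStandardEtale_mvPolynomial (R := R) (p := 𝔭)
  let P := MvPolynomial (Fin n) R
  let S := Localization.Away f
  let A := Localization.AtPrime 𝔭
  have hle : Submonoid.powers f ≤ 𝔭.primeCompl := by
    rw [Submonoid.powers_le]; exact hf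
  let : Algebra S A := IsLocalization.localizationAlgebraOfSubmonoidLe S A _ _ hle
  have : IsScalarTower R' S A := IsLocalization.localization_isScalarTower_of_submonoid_le S A _ _ hle
  have hSA : IsLocalization (𝔭.primeCompl.map (algebraMap R' S)) A :=
    IsLocalization.isLocalization_of_submonoid_le S A _ _ hle
  let : Algebra P A := ((algebraMap S A).comp (algebraMap P S)).toAlgebra
  have : IsScalarTower P S A := .of_algebraMap_eq' rfl
  have : IsScalarTower R S A := .of_algebraMap_eq fun r => by
    rw [IsScalarTower.algebraMap_apply R R' A, IsScalarTower.algebraMap_apply R' S A,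
      ← IsScalarTower.algebraMap_apply R R' S]
  have : IsScalarTower R P A := .of_algebraMap_eq fun r => by
    rw [IsScalarTower.algebraMap_apply R S A, IsScalarTower.algebraMap_apply R P S,
      ← IsScalarTower.algebraMap_apply P S A]
  have : IsLocalHom (algebraMap R A) := by
    refine ((local_hom_TFAE (algebraMap R A)).out 0 2).mpr ?_
    rw [IsScalarTower.algebraMap_eq R R' A, ← Ideal.map_map,
      ← Localization.AtPrime.map_eq_maximalIdeal]
    exact Ideal.map_mono h𝔭
  have : Algebra.Etale P S := inferInstance
  have : Algebra.FormallyUnramified S A := .of_isLocalization (𝔭.primeCompl.map (algebraMap R' S))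
  have : Algebra.FormallyUnramified P A := .comp P S A
  have : Algebra.EssFiniteType S A := .of_isLocalization _ (𝔭.primeCompl.map (algebraMap R' S))
  have : Algebra.EssFiniteType P A := .comp P S A
  have : Module.Flat S A := IsLocalization.flat _ (𝔭.primeCompl.map (algebraMap R' S))
  have : Module.Flat P A := .trans P S A
  refine unibranch_aux R P A (FractionRing P) (fun y hy => mem_adjoin_of_isIntegral R _ n y hy) ?_
  exact TensorProduct.toIntegralClosure_bijective_of_tower (S := S)
    TensorProduct.toIntegralClosure_bijective_of_smooth
    (TensorProduct.toIntegralClosure_bijective_of_isLocalization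
      (𝔭.primeCompl.map (algebraMap R' S)))
end

section
/- Let R be a Noetherian local unique factorization domain and let Δ be a prime element of R lying in the maximal ideal m_R. Then the quotient ring R[u,v]/(uv − Δ) of the polynomial ring in two variables is a unique factorization domain. -/
open IsLocalRing

/-- Laurent polynomials over a UFD form a UFD. -/
theorem aux_laurent_ufd (R : Type*) [CommRing R] [IsDomain R] [UniqueFactorizationMonoid R] :
    UniqueFactorizationMonoid (LaurentPolynomial R) :=
  UniqueFactorizationMonoid.of_isLocalization
    (Submonoid.powers (Polynomial.X : Polynomial R)) (LaurentPolynomial R)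

theorem aux_main.{w} (R : Type w) [CommRing R] [IsDomain R] [IsNoetherianRing R]
    [UniqueFactorizationMonoid R] (Δ : R) (hΔ : Prime Δ)
    (A : Type w) [CommRing A] [IsNoetherianRing A] (π : MvPolynomial (Fin 2) R →+* A)
    (hπ : Function.Surjective π)
    (hker : ∀ f, π f = 0 ↔ (MvPolynomial.X 0 * MvPolynomial.X 1 - MvPolynomial.C Δ) ∣ f)
    (lift : ∀ (B : Type w) [CommRing B] (g : MvPolynomial (Fin 2) R →+* B),
      g (MvPolynomial.X 0 * MvPolynomial.X 1 - MvPolynomial.C Δ) = 0 →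
      ∃ φ : A →+* B, ∀ f, φ (π f) = g f) :
    ∃ _ : IsDomain A, UniqueFactorizationMonoid A := by
  classical
  set u : A := π (MvPolynomial.X 0) with hu
  set v : A := π (MvPolynomial.X 1) with hv
  set c : R →+* A := π.comp MvPolynomial.C with hc
  have huv : u * v = c Δ := by
    have := (hker _).2 dvd_rfl
    rw [map_sub, map_mul, sub_eq_zero] at this
    exact this
  -- induction principle
  have ind : ∀ (P : A → Prop), (∀ r, P (c r)) → (∀ a b, P a → P b → P (a + b)) →
      (∀ a, P a → P (a * u)) → (∀ a, P a → P (a * v)) → ∀ a, P a := by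
    intro P h1 h2 h3 h4 a
    obtain ⟨f, rfl⟩ := hπ a
    induction f using MvPolynomial.induction_on with
    | C r => exact h1 r
    | add p q hp hq => rw [map_add]; exact h2 _ _ hp hq
    | mul_X p i hp =>
      rw [map_mul]
      fin_cases i
      · exact h3 _ hp
      · exact h4 _ hp
  -- `u` is a nonzerodivisor
  have hX0 : Prime (MvPolynomial.X 0 : MvPolynomial (Fin 2) R) := MvPolynomial.X_prime
  have hnd : ¬ (MvPolynomial.X 0 : MvPolynomial (Fin 2) R) ∣
      MvPolynomial.X 0 * MvPolynomial.X 1 - MvPolynomial.C Δ := by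
    intro h
    rw [dvd_sub_right (dvd_mul_right _ _)] at h
    obtain ⟨q, hq⟩ := h
    have := congrArg (MvPolynomial.eval (0 : Fin 2 → R)) hq
    simp at this
    exact hΔ.ne_zero this
  have hnzd : ∀ a, u * a = 0 → a = 0 := by
    intro a ha
    obtain ⟨f, rfl⟩ := hπ a
    rw [hu, ← map_mul, hker] at ha
    obtain ⟨h, hh⟩ := ha
    rcases hX0.dvd_or_dvd ⟨f, hh.symm⟩ with h1 | ⟨k, rfl⟩
    · exact absurd h1 hnd
    · rw [hker]
      refine ⟨k, mul_left_cancel₀ hX0.ne_zero ?_⟩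
      rw [hh]; ring
  have hnzdpow : ∀ n a, u ^ n * a = 0 → a = 0 := by
    intro n
    induction n with
    | zero => intro a h; simpa using h
    | succ n ih => intro a h; exact hnzd _ (ih _ (by rw [← h]; ring))
  -- map to Laurent polynomials
  obtain ⟨φ, hφ⟩ := lift (LaurentPolynomial R)
    (MvPolynomial.eval₂Hom LaurentPolynomial.C
      ![LaurentPolynomial.T 1, LaurentPolynomial.C Δ * LaurentPolynomial.T (-1)]) (by
        simp [mul_left_comm, ← LaurentPolynomial.T_add])
  have hφu : φ u = LaurentPolynomial.T 1 := by rw [hu, hφ]; simp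
  have hφc : ∀ r, φ (c r) = LaurentPolynomial.C r := by
    intro r; rw [hc, RingHom.comp_apply, hφ]; simp
  have hφp : ∀ p : Polynomial R, φ (p.eval₂ c u) = Polynomial.toLaurent p := by
    intro p
    induction p using Polynomial.induction_on' with
    | add p q hp hq => simp [Polynomial.eval₂_add, hp, hq]
    | monomial n r =>
      simp [Polynomial.eval₂_monomial, hφu, hφc, ← Polynomial.C_mul_X_pow_eq_monomial]
  have hclear : ∀ a, ∃ (n : ℕ) (p : Polynomial R), u ^ n * a = p.eval₂ c u := by
    apply ind
    · intro r; exact ⟨0, Polynomial.C r, by simp⟩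
    · rintro a b ⟨n, p, hp⟩ ⟨m, q, hq⟩
      refine ⟨n + m, Polynomial.X ^ m * p + Polynomial.X ^ n * q, ?_⟩
      simp only [Polynomial.eval₂_add, Polynomial.eval₂_mul, Polynomial.eval₂_X_pow, ← hp, ← hq]
      ring
    · rintro a ⟨n, p, hp⟩
      refine ⟨n, p * Polynomial.X, ?_⟩
      simp only [Polynomial.eval₂_mul, Polynomial.eval₂_X, ← hp]
      ring
    · rintro a ⟨n, p, hp⟩
      refine ⟨n + 1, p * Polynomial.C Δ, ?_⟩
      simp only [Polynomial.eval₂_mul, Polynomial.eval₂_C, ← hp, ← huv]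
      ring
  have hinj : Function.Injective φ := by
    rw [injective_iff_map_eq_zero]
    intro a ha
    obtain ⟨n, p, hp⟩ := hclear a
    have h1 : Polynomial.toLaurent p = 0 := by rw [← hφp, ← hp, map_mul, ha, mul_zero]
    have h2 : p = 0 := Polynomial.toLaurent_injective (by rw [h1, map_zero])
    rw [h2, Polynomial.eval₂_zero] at hp
    exact hnzdpow n a hp
  have hdomL : IsDomain (LaurentPolynomial R) :=
    IsLocalization.Away.isDomain (LaurentPolynomial R) (Polynomial.X_ne_zero (R := R))
  have hdom : IsDomain A := hinj.isDomain φ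
  have hu0 : u ≠ 0 := by
    intro h
    have h1 := hnzd 1 (by rw [h, zero_mul])
    exact one_ne_zero h1
  refine ⟨hdom, ?_⟩
  -- `u` is prime
  have hPI : (Ideal.span {Δ}).IsPrime := (Ideal.span_singleton_prime hΔ.ne_zero).2 hΔ
  obtain ⟨ψ, hψ⟩ := lift (Polynomial (R ⧸ Ideal.span {Δ}))
    (MvPolynomial.eval₂Hom (Polynomial.C.comp (Ideal.Quotient.mk _))
      ![0, Polynomial.X]) (by simp [Ideal.Quotient.eq_zero_iff_mem, Ideal.mem_span_singleton])
  have hψu : ψ u = 0 := by rw [hu, hψ]; simp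
  have hψv : ψ v = Polynomial.X := by rw [hv, hψ]; simp
  have hψc : ∀ r, ψ (c r) = Polynomial.C (Ideal.Quotient.mk _ r) := by
    intro r; rw [hc, RingHom.comp_apply, hψ]; simp
  have hψp : ∀ p : Polynomial R, ψ (p.eval₂ c v) = p.map (Ideal.Quotient.mk _) := by
    intro p
    induction p using Polynomial.induction_on' with
    | add p q hp hq => simp [Polynomial.eval₂_add, hp, hq]
    | monomial n r =>
      simp [Polynomial.eval₂_monomial, hψv, hψc, ← Polynomial.C_mul_X_pow_eq_monomial]
  have hdec : ∀ a, ∃ (b : A) (p : Polynomial R), a = u * b + p.eval₂ c v := by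
    apply ind
    · intro r; exact ⟨0, Polynomial.C r, by simp⟩
    · rintro _ _ ⟨b, p, rfl⟩ ⟨d, q, rfl⟩
      exact ⟨b + d, p + q, by rw [Polynomial.eval₂_add]; ring⟩
    · rintro a -
      exact ⟨a, 0, by rw [Polynomial.eval₂_zero]; ring⟩
    · rintro _ ⟨b, p, rfl⟩
      exact ⟨b * v, p * Polynomial.X, by rw [Polynomial.eval₂_mul, Polynomial.eval₂_X]; ring⟩
  have hkerψ : ∀ a, ψ a = 0 → u ∣ a := by
    intro a ha
    obtain ⟨b, p, rfl⟩ := hdec a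
    rw [map_add, map_mul, hψu, zero_mul, zero_add, hψp] at ha
    have h1 : Polynomial.C Δ ∣ p := by
      rw [Polynomial.C_dvd_iff_dvd_coeff]
      intro i
      have := congrArg (fun q => Polynomial.coeff q i) ha
      simpa [Ideal.Quotient.eq_zero_iff_mem, Ideal.mem_span_singleton] using this
    obtain ⟨q, rfl⟩ := h1
    rw [Polynomial.eval₂_mul, Polynomial.eval₂_C, ← huv]
    exact dvd_add (dvd_mul_right _ _) ⟨v * q.eval₂ c v, by ring⟩
  have hup : Prime u := by
    refine ⟨hu0, fun h => ?_, fun a b hab => ?_⟩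
    · have := h.map ψ
      rw [hψu] at this
      exact not_isUnit_zero this
    · obtain ⟨d, hd⟩ := hab
      have : ψ a * ψ b = 0 := by rw [← map_mul, hd, map_mul, hψu, zero_mul]
      exact (mul_eq_zero.1 this).imp (hkerψ a) (hkerψ b)
  -- localization
  letI : Algebra A (LaurentPolynomial R) := φ.toAlgebra
  have hloc : IsLocalization.Away u (LaurentPolynomial R) := by
    refine ⟨?_, ?_, ?_⟩
    · rintro ⟨_, n, rfl⟩
      change IsUnit (φ (u ^ n))
      rw [map_pow, hφu]
      exact (LaurentPolynomial.isUnit_T 1).pow n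
    · intro z
      obtain ⟨n, p, hp⟩ := LaurentPolynomial.exists_T_pow z
      refine ⟨(p.eval₂ c u, ⟨u ^ n, n, rfl⟩), ?_⟩
      change z * φ (u ^ n) = φ (p.eval₂ c u)
      rw [hφp, hp, map_pow, hφu, LaurentPolynomial.T_pow]
      simp
    · intro a b hab
      exact ⟨1, by rw [hinj hab]⟩
  rw [UniqueFactorizationMonoid.iff_of_isLocalizationAway_of_prime hup (LaurentPolynomial R)]
  exact aux_laurent_ufd R


/-- Let `R` be a Noetherian local unique factorization domain and `Δ` a prime element of
`R` lying in the maximal ideal. Then `R[u,v]/(uv − Δ)` is a unique factorization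
domain. -/
theorem polynomial_quotient_ufd_of_prime
    (R : Type*) [CommRing R] [IsDomain R] [IsNoetherianRing R] [IsLocalRing R]
    [UniqueFactorizationMonoid R]
    (Δ : R) (hΔmem : Δ ∈ maximalIdeal R) (hΔ : Prime Δ) :
    ∃ _hdom : IsDomain
        (MvPolynomial (Fin 2) R ⧸
          Ideal.span {(MvPolynomial.X 0 : MvPolynomial (Fin 2) R) * MvPolynomial.X 1 -
            MvPolynomial.C Δ}),
      UniqueFactorizationMonoid
        (MvPolynomial (Fin 2) R ⧸
          Ideal.span {(MvPolynomial.X 0 : MvPolynomial (Fin 2) R) * MvPolynomial.X 1 -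
            MvPolynomial.C Δ}) := by
  refine aux_main R Δ hΔ _ (Ideal.Quotient.mk _) Ideal.Quotient.mk_surjective ?_ ?_
  · intro f
    rw [Ideal.Quotient.eq_zero_iff_mem, Ideal.mem_span_singleton]
  · intro B _ g hg
    refine ⟨Ideal.Quotient.lift _ g ?_, fun f => rfl⟩
    intro a ha
    obtain ⟨b, rfl⟩ := Ideal.mem_span_singleton.1 ha
    rw [map_mul, hg, zero_mul]
end
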